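/- arXiv:1409.4799 — 2 statements merged into one kernel-verified Lean document; each statement's English description precedes it below -/
import Mathlib

section
/- (Huzita) Let α ∈ (0, π/2), let A = (a_x, a_y) with a_y ≠ 0, and let B = (b_x, b_y) with b_y ≠ b_x·tan α (B does not lie on the line through the origin of slope tan α). Let X ∈ ℝ with X ≠ 0 and a_y ≠ X·tan α, put A′ = (a_x − X, 0), and suppose there exist t ∈ ℝ and B′ = (t·cos α, t·sin α) with B′ ≠ B such that the perpendicular bisector of A and A′ equals the perpendicular bisector of B and B′ (a single fold maps A onto a point A′ of the x-axis and simultaneously B onto a point B′ of the line through the origin with angle α). Then X satisfies the cubic equation X³ + (b_x − 2a_x + (b_y − a_y)/tan α)·X² + a_y·(2b_y − a_y + 2(a_x − b_x)/tan α)·X − a_y²·(b_x − (a_y − b_y)/tan α) = 0. -/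
noncomputable section
open Real EuclideanGeometry

/-- Points of the Euclidean plane `ℝ²`. -/
abbrev Pt : Type := EuclideanSpace ℝ (Fin 2)

/-- The point of `ℝ²` with coordinates `(x, y)`. -/
def pt (x y : ℝ) : Pt := !₂[x, y]

/-- The perpendicular bisector of two points `U`, `V` of the plane: the crease
obtained by folding `U` onto `V`. -/
def perpBisector (U V : Pt) : Set Pt := {P | dist P U = dist P V}

theorem mem_pb (x y a b c d : ℝ) : pt x y ∈ perpBisector (pt a b) (pt c d) ↔
    (x - a)^2 + (y - b)^2 = (x - c)^2 + (y - d)^2 := by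
  simp only [perpBisector, Set.mem_setOf_eq, pt, EuclideanSpace.dist_eq, Fin.sum_univ_two,
    Real.dist_eq, sq_abs]
  rw [Real.sqrt_inj (by positivity) (by positivity)]
  simp

/-- **Huzita's origami solution of the general cubic.**  Let `α ∈ (0, π/2)`,
`A = (a_x, a_y)` with `a_y ≠ 0`, `B = (b_x, b_y)` not on the line through the origin
of slope `tan α`.  Let `X ≠ 0` with `a_y ≠ X·tan α` and `A' = (a_x - X, 0)`.  If a single
fold maps `A` onto `A'` and simultaneously `B` onto some point `B' ≠ B` of the line
through the origin with angle `α` (one common crease = common perpendicular bisector),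
then `X` satisfies the stated cubic equation. -/
theorem huzita_cubic (α a_x a_y b_x b_y X : ℝ)
    (hα : α ∈ Set.Ioo 0 (π/2)) (ha : a_y ≠ 0)
    (hb : b_y ≠ b_x * Real.tan α)
    (hX : X ≠ 0) (hXα : a_y ≠ X * Real.tan α)
    (hfold : ∃ t : ℝ, pt (t * Real.cos α) (t * Real.sin α) ≠ pt b_x b_y ∧
      perpBisector (pt a_x a_y) (pt (a_x - X) 0)
        = perpBisector (pt b_x b_y) (pt (t * Real.cos α) (t * Real.sin α))) :
    X^3 + (b_x - 2*a_x + (b_y - a_y)/Real.tan α) * X^2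
      + a_y * (2*b_y - a_y + 2*(a_x - b_x)/Real.tan α) * X
      - a_y^2 * (b_x - (a_y - b_y)/Real.tan α) = 0 := by
  obtain ⟨t, hne, heq⟩ := hfold
  have hcos : 0 < Real.cos α := Real.cos_pos_of_mem_Ioo ⟨by linarith [hα.1, Real.pi_pos], hα.2⟩
  have hT : Real.tan α ≠ 0 := (Real.tan_pos_of_pos_of_lt_pi_div_two hα.1 hα.2).ne'
  have hy : t * Real.sin α = Real.tan α * (t * Real.cos α) := by
    rw [Real.tan_eq_sin_div_cos]; field_simp
  rw [hy] at heq
  clear hne hy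
  generalize t * Real.cos α = x at heq
  generalize Real.tan α = T at *
  have e1 := (mem_pb (a_x - X/2) (a_y/2) _ _ _ _).1 (heq ▸ (mem_pb _ _ _ _ _ _).2 (by ring))
  have e2 := (mem_pb (a_x - X/2 - a_y) (a_y/2 + X) _ _ _ _).1
    (heq ▸ (mem_pb _ _ _ _ _ _).2 (by ring))
  obtain ⟨s, hs⟩ : ∃ s, b_x - x = s * X := ⟨(b_x - x) / X, by field_simp⟩
  have hv : b_y - T * x = s * a_y := by
    apply mul_right_cancel₀ hX
    linear_combination (e1 - e2) / 2 + a_y * hs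
  have hs0 : s ≠ 0 := by
    rintro rfl
    apply hb
    linear_combination hv - T * hs
  obtain rfl : x = b_x - s * X := by linarith
  have hk : s * (X^2 + a_y^2) = X^2 + 2*X*(b_x - a_x) + 2*a_y*b_y - a_y^2 := by
    apply mul_left_cancel₀ hs0
    have hw : T * (b_x - s * X) = b_y - s * a_y := by linarith
    rw [hw] at e1
    linear_combination -e1
  have hl : b_y - T * b_x = s * (a_y - T * X) := by linear_combination hv
  field_simp
  linear_combination (X^2 + a_y^2) * hl + (a_y - T * X) * hk
end
end

section
/- (Origami trisection fold) Let h > 0 and σ ∈ (0, π/6). In ℝ², put B = (0,0), E = (0, 2h), B′ = (h·cos σ/sin σ, h), and E′ = ((h/sin σ)·cos 3σ, (h/sin σ)·sin 3σ). Then B ≠ B′, E ≠ E′, and the perpendicular bisector of B and B′ equals the perpendicular bisector of E and E′; that is, a single fold maps B onto the point B′ of the horizontal line {p₂ = h} and simultaneously maps E onto the point E′ of the ray from the origin with direction angle 3σ. Since B′ lies on the ray from B with direction angle σ, this fold trisects the angle α = 3σ. -/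
noncomputable section
open Real EuclideanGeometry

theorem mem_perpBisector_pt (a b c d : ℝ) (P : Pt) :
    P ∈ perpBisector (pt a b) (pt c d) ↔
      (P 0 - a)^2 + (P 1 - b)^2 = (P 0 - c)^2 + (P 1 - d)^2 := by
  have e : ∀ u v : ℝ, dist P (pt u v) = Real.sqrt ((P 0 - u)^2 + (P 1 - v)^2) := by
    intro u v
    simp [EuclideanSpace.dist_eq, pt, Real.dist_eq, sq_abs]
  show dist P _ = dist P _ ↔ _
  rw [e, e, Real.sqrt_inj (by positivity) (by positivity)]

/-- **The origami trisection fold.**  Let `h > 0` and `σ ∈ (0, π/6)`.  With `B = (0,0)`,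
`E = (0,2h)`, `B' = (h·cos σ/sin σ, h)` (on the horizontal line `{p | p 1 = h}` and on
the ray from `B` of angle `σ`) and `E' = ((h/sin σ)·cos 3σ, (h/sin σ)·sin 3σ)` (on the
ray of angle `3σ`), we have `B ≠ B'`, `E ≠ E'`, and the crease folding `B` onto `B'`
coincides with the crease folding `E` onto `E'`: a single fold trisects `α = 3σ`. -/
theorem origami_trisection_fold (h σ : ℝ) (hh : 0 < h) (hσ : σ ∈ Set.Ioo 0 (π/6))
    (B : Pt) (hB : B = pt 0 0) (E : Pt) (hE : E = pt 0 (2*h))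
    (B' : Pt) (hB' : B' = pt (h * Real.cos σ / Real.sin σ) h)
    (E' : Pt) (hE' : E' = pt ((h / Real.sin σ) * Real.cos (3*σ)) ((h / Real.sin σ) * Real.sin (3*σ))) :
    B ≠ B' ∧ E ≠ E' ∧ perpBisector B B' = perpBisector E E' := by
  obtain ⟨h0, h1⟩ := hσ
  have hpi := Real.pi_pos
  have hs : 0 < Real.sin σ := Real.sin_pos_of_pos_of_lt_pi h0 (by linarith)
  have hc : 0 < Real.cos σ := Real.cos_pos_of_mem_Ioo ⟨by linarith, by linarith⟩
  have hs2 : Real.sin σ < 1 / 2 := by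
    rw [← Real.sin_pi_div_six]
    exact Real.sin_lt_sin_of_lt_of_le_pi_div_two (by linarith) (by linarith) h1
  have hsc := Real.sin_sq_add_cos_sq σ
  have h3c := Real.cos_three_mul σ
  have h3s := Real.sin_three_mul σ
  generalize Real.sin (3*σ) = S at *
  generalize Real.cos (3*σ) = C at *
  generalize Real.sin σ = s at *
  generalize Real.cos σ = c at *
  obtain ⟨k, rfl⟩ : ∃ k, h = k * s := ⟨h / s, by field_simp⟩
  have hk : 0 < k := pos_of_mul_pos_left hh hs.le
  have e1 : k * s * c / s = k * c := by field_simp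
  have e2 : k * s / s = k := by field_simp
  rw [e1] at hB'
  rw [e2] at hE'
  have hC : C = c * (1 - 4 * s^2) := by rw [h3c]; linear_combination 4 * c * hsc
  have hd : 0 < 1 - 4 * s^2 := by nlinarith
  subst hB hE hB' hE'
  refine ⟨?_, ?_, ?_⟩
  · intro he
    have := congrArg (fun P : Pt => P 1) he
    simp [pt] at this
    grind
  · intro he
    have := congrArg (fun P : Pt => P 0) he
    simp [pt] at this
    have : 0 < C := by rw [hC]; positivity
    grind
  · ext P
    rw [mem_perpBisector_pt, mem_perpBisector_pt]
    generalize P 0 = x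
    generalize P 1 = y
    have key : (x - 0)^2 + (y - 2 * (k * s))^2 - ((x - k * C)^2 + (y - k * S)^2)
        = (1 - 4 * s^2) * ((x - 0)^2 + (y - 0)^2 - ((x - k * c)^2 + (y - k * s)^2)) := by
      have c2 : c^2 = 1 - s^2 := by linarith
      rw [hC, h3s]
      linear_combination (-k^2 * (1 - 4*s^2)^2 + k^2 * (1 - 4*s^2)) * c2
    constructor
    · intro H
      have : (1 - 4 * s^2) * ((x - 0)^2 + (y - 0)^2 - ((x - k * c)^2 + (y - k * s)^2)) = 0 := by
        rw [H]; ring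
      linarith
    · intro H
      have : (1 - 4 * s^2) * ((x - 0)^2 + (y - 0)^2 - ((x - k * c)^2 + (y - k * s)^2)) = 0 := by
        linarith
      rcases mul_eq_zero.mp this with h | h <;> linarith
end
end
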